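/- Let f,g∈𝒮 with |f'(x)|≥|g'(x)| for every x∈[0,1] (one-sided derivatives at the turning points), with c_f=c_g=:c, and with |c−a_f|/|c−a'_f| ≥ |c−a_g|/|c−a'_g|. Then I_f ⊇ I_g. -/

import Mathlib

open Set Function

/-- The function χ_g: 1/2 where (g(x)−x)(g(g(x))−g(x)) ≤ 0, and 0 otherwise. -/
noncomputable def chi (g : ℝ → ℝ) (x : ℝ) : ℝ :=
  if (g x - x) * (g (g x) - g x) ≤ 0 then 1 / 2 else 0

/-- Over-rotation number of a periodic point `y` of `g`. -/
noncomputable def overRotNum (g : ℝ → ℝ) (y : ℝ) : ℝ :=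
  (∑ i ∈ Finset.range (Function.minimalPeriod g y), chi g (g^[i] y)) /
    (Function.minimalPeriod g y : ℝ)

/-- The over-rotation interval of `g` on the domain `s`: the closure of the set of
over-rotation numbers of periodic non-fixed points of `g` in `s`. -/
def overRotInterval (g : ℝ → ℝ) (s : Set ℝ) : Set ℝ :=
  closure { r : ℝ | ∃ y ∈ s, y ∈ Function.periodicPts g ∧ g y ≠ y ∧ overRotNum g y = r }

/-- `f` is piecewise monotone on `[a,b]`. -/
def PiecewiseMonotoneOn (f : ℝ → ℝ) (a b : ℝ) : Prop :=
  ∃ n : ℕ, ∃ t : Fin (n + 1) → ℝ, StrictMono t ∧ t 0 = a ∧ t (Fin.last n) = b ∧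
    ∀ i : Fin n, MonotoneOn f (Set.Icc (t i.castSucc) (t i.succ)) ∨
      AntitoneOn f (Set.Icc (t i.castSucc) (t i.succ))


/-- The class 𝒮: concave maps of `[0,1]` into itself with `f(0)=f(1)=0`, a unique turning
point `c ∈ (0,1)` which is a maximum with `f(c) > c`, and `C¹` on `[0,c]` and on `[c,1]`. -/
structure SClass (f : ℝ → ℝ) (c : ℝ) : Prop where
  maps : Set.MapsTo f (Set.Icc 0 1) (Set.Icc 0 1)
  f0 : f 0 = 0
  f1 : f 1 = 0
  hc : c ∈ Set.Ioo (0:ℝ) 1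
  concave : ConcaveOn ℝ (Set.Icc 0 1) f
  mono : StrictMonoOn f (Set.Icc 0 c)
  anti : StrictAntiOn f (Set.Icc c 1)
  fcgt : c < f c
  smoothL : ContDiffOn ℝ 1 f (Set.Icc 0 c)
  smoothR : ContDiffOn ℝ 1 f (Set.Icc c 1)

/-- A unimodal map of `[z, w]` with turning point `c`, fixing `z` and `a`, with `A` the second
preimage of `a`, and no other fixed point in `(z, a)`. -/
structure UnimodalMap (h : ℝ → ℝ) (z w c a A : ℝ) : Prop where
  lt_A : z < A
  A_lt : A < c
  c_lt : c < a
  a_le : a ≤ w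
  cont : ContinuousOn h (Icc z w)
  maps : MapsTo h (Icc z w) (Icc z w)
  mono : StrictMonoOn h (Icc z c)
  anti : StrictAntiOn h (Icc c w)
  map_z : h z = z
  map_a : h a = a
  map_A : h A = a
  lt_map : ∀ x ∈ Ioo z a, x < h x

/-- The first return map to the left of the fixed point `a`. -/
noncomputable def firstReturn (h : ℝ → ℝ) (a x : ℝ) : ℝ :=
  if h x ≤ a then h x else h (h x)

/-- The number of excursions to the right of `a` during the first `n` returns. -/
noncomputable def crossings (h : ℝ → ℝ) (a x : ℝ) (n : ℕ) : ℕ :=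
  Nat.count (fun i => a < h ((firstReturn h a)^[i] x)) n

theorem overRotNum_eq_birkhoffSum_div {h : ℝ → ℝ} {x : ℝ} {t : ℕ} (ht : 0 < t)
    (hx : h^[t] x = x) : overRotNum h x = birkhoffSum h (chi h) t x / t := by
  obtain ⟨r, rfl⟩ := (Function.IsPeriodicPt.minimalPeriod_dvd (f := h) (x := x) hx)
  have hp : 0 < Function.minimalPeriod h x := Nat.pos_of_mul_pos_right ht
  have hr : 0 < r := Nat.pos_of_mul_pos_left ht
  have key : ∀ r : ℕ, birkhoffSum h (chi h) (Function.minimalPeriod h x * r) x =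
      r * birkhoffSum h (chi h) (Function.minimalPeriod h x) x := by
    intro r
    induction r with
    | zero => simp
    | succ r ih =>
      have hfix : h^[Function.minimalPeriod h x * r] x = x :=
        (Function.isPeriodicPt_minimalPeriod h x).mul_const r
      rw [Nat.mul_succ, birkhoffSum_add, ih, hfix]
      push_cast
      ring
  rw [key, Nat.cast_mul, mul_comm, mul_div_mul_right _ _ (by exact_mod_cast hr.ne')]
  rfl

namespace UnimodalMap

variable {h : ℝ → ℝ} {z w c a A : ℝ}

theorem map_lt_of_gt (H : UnimodalMap h z w c a A) {x : ℝ} (hx : a < x) (hxw : x ≤ w) :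
    h x < a := by
  have := H.anti ⟨H.c_lt.le, H.a_le⟩ ⟨(H.c_lt.trans hx).le, hxw⟩ hx
  rwa [H.map_a] at this

theorem map_le_top (H : UnimodalMap h z w c a A) {x : ℝ} (hx : x ∈ Icc z w) : h x ≤ h c := by
  have h1 := H.lt_A
  have h2 := H.A_lt
  have h3 := H.c_lt
  have h4 := H.a_le
  rcases le_total x c with hc | hc
  · exact H.mono.monotoneOn ⟨hx.1, hc⟩ ⟨by linarith, le_rfl⟩ hc
  · exact H.anti.antitoneOn ⟨le_rfl, by linarith⟩ ⟨hc, hx.2⟩ hc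

theorem map_le_of_le_A (H : UnimodalMap h z w c a A) {x : ℝ} (hx : z ≤ x) (hxA : x ≤ A) :
    h x ≤ a := by
  have h1 := H.A_lt
  rw [← H.map_A]
  exact H.mono.monotoneOn ⟨hx, by linarith⟩ ⟨by linarith, h1.le⟩ hxA

theorem lt_map_of_gt_A (H : UnimodalMap h z w c a A) {x : ℝ} (hx : A < x) (hxa : x < a) :
    a < h x := by
  have h1 := H.lt_A
  have h2 := H.A_lt
  have h3 := H.c_lt
  have h4 := H.a_le
  rcases le_total x c with hc | hc
  · have := H.mono ⟨h1.le, h2.le⟩ ⟨by linarith, hc⟩ hx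
    rwa [H.map_A] at this
  · have := H.anti ⟨hc, by linarith⟩ ⟨h3.le, h4⟩ hxa
    rwa [H.map_a] at this

theorem iterate_eq_and_birkhoffSum_eq (H : UnimodalMap h z w c a A) {x : ℝ}
    (hx : ∀ i, (firstReturn h a)^[i] x ∈ Ioo z a) (n : ℕ) :
    h^[n + crossings h a x n] x = (firstReturn h a)^[n] x ∧
      birkhoffSum h (chi h) (n + crossings h a x n) x = crossings h a x n := by
  induction n with
  | zero => simp [crossings]
  | succ n ih =>
    obtain ⟨ih1, ih2⟩ := ih
    have hu := hx n
    have hFu := hx (n + 1)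
    rw [Function.iterate_succ_apply'] at hFu ⊢
    have hc : crossings h a x (n + 1) =
        crossings h a x n + if a < h ((firstReturn h a)^[n] x) then 1 else 0 := by
      simp only [crossings, Nat.count_succ]
    set u := (firstReturn h a)^[n] x with hu_def
    set m := crossings h a x n with hm
    have hxw : u ∈ Icc z w := ⟨hu.1.le, hu.2.le.trans H.a_le⟩
    have h1 := H.lt_map u hu
    by_cases hM : a < h u
    · rw [if_pos hM] at hc
      have hF : firstReturn h a u = h (h u) := by simp [firstReturn, not_le.2 hM]
      rw [hF] at hFu ⊢
      have h2 : h (h u) < h u := hFu.2.trans hM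
      have h3 := H.lt_map _ hFu
      have c1 : chi h u = 1 / 2 := by
        rw [chi, if_pos]
        exact mul_nonpos_of_nonneg_of_nonpos (by linarith) (by linarith)
      have c2 : chi h (h u) = 1 / 2 := by
        rw [chi, if_pos]
        exact mul_nonpos_of_nonpos_of_nonneg (by linarith) (by linarith)
      rw [hc, show n + 1 + (m + 1) = (n + m) + 1 + 1 by ring]
      refine ⟨by rw [Function.iterate_succ_apply', Function.iterate_succ_apply', ih1], ?_⟩
      rw [birkhoffSum_succ, birkhoffSum_succ, Function.iterate_succ_apply', ih1, ih2, c1, c2]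
      push_cast
      ring
    · rw [if_neg hM] at hc
      have hF : firstReturn h a u = h u := by simp [firstReturn, not_lt.1 hM]
      rw [hF] at hFu ⊢
      have h3 := H.lt_map _ hFu
      have c1 : chi h u = 0 := by
        rw [chi, if_neg]
        exact not_le.2 (mul_pos (by linarith) (by linarith))
      rw [hc, show n + 1 + (m + 0) = (n + m) + 1 by ring]
      refine ⟨by rw [Function.iterate_succ_apply', ih1], ?_⟩
      rw [birkhoffSum_succ, ih1, ih2, c1]
      push_cast
      ring

theorem overRotNum_of_firstReturn_cycle (H : UnimodalMap h z w c a A) {x : ℝ} {Q : ℕ}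
    (hQ : 0 < Q) (hcyc : (firstReturn h a)^[Q] x = x)
    (hx : ∀ i, (firstReturn h a)^[i] x ∈ Ioo z a) :
    x ∈ Function.periodicPts h ∧ h x ≠ x ∧
      overRotNum h x = (crossings h a x Q : ℝ) / (Q + crossings h a x Q) := by
  obtain ⟨h1, h2⟩ := H.iterate_eq_and_birkhoffSum_eq hx Q
  rw [hcyc] at h1
  have hpos : 0 < Q + crossings h a x Q := by omega
  refine ⟨⟨_, hpos, h1⟩, (H.lt_map x (hx 0)).ne', ?_⟩
  rw [overRotNum_eq_birkhoffSum_div hpos h1, h2]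
  push_cast
  rfl

theorem exists_crossings_eq (x : ℝ) (p : ℕ) : ∃ n, n + crossings h a x n = p ∨
    (n + crossings h a x n + 1 = p ∧ a < h ((firstReturn h a)^[n] x)) := by
  induction p with
  | zero => exact ⟨0, Or.inl (by simp [crossings])⟩
  | succ p ih =>
    obtain ⟨n, hn⟩ := ih
    have hc : crossings h a x (n + 1) =
        crossings h a x n + if a < h ((firstReturn h a)^[n] x) then 1 else 0 := by
      simp only [crossings, Nat.count_succ]
    by_cases hM : a < h ((firstReturn h a)^[n] x)
    · rw [if_pos hM] at hc
      rcases hn with hn | ⟨hn, -⟩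
      · exact ⟨n, Or.inr ⟨by omega, hM⟩⟩
      · exact ⟨n + 1, Or.inl (by omega)⟩
    · rw [if_neg hM] at hc
      rcases hn with hn | ⟨-, hn⟩
      · exact ⟨n + 1, Or.inl (by omega)⟩
      · exact absurd hn hM

theorem iterate_mem_and_ne (H : UnimodalMap h z w c a A) {y : ℝ} (hy : y ∈ Icc z w)
    (hper : y ∈ Function.periodicPts h) (hne : h y ≠ y) (i : ℕ) :
    h^[i] y ∈ Icc z w ∧ h (h^[i] y) ≠ h^[i] y := by
  refine ⟨H.maps.iterate i hy, fun hfix => hne ?_⟩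
  obtain ⟨p, hp, hpy⟩ := hper
  have hfix' : ∀ n, h^[n] (h^[i] y) = h^[i] y := fun n => Function.iterate_fixed hfix n
  have h1 : h^[p * i] y = y := hpy.mul_const i
  have h2 : h^[p * i] y = h^[i] y := by
    obtain ⟨r, hr⟩ : ∃ r, p * i = r + i := ⟨p * i - i, by
      have := Nat.le_mul_of_pos_left i hp
      omega⟩
    rw [hr, Function.iterate_add_apply, hfix']
  rw [h1] at h2
  rw [h2]
  exact hfix

/-- A periodic orbit yields a cycle of the first return map with matching over-rotation number. -/
theorem exists_firstReturn_cycle_of_periodic (H : UnimodalMap h z w c a A) {y : ℝ}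
    (hy : y ∈ Icc z w) (hper : y ∈ Function.periodicPts h) (hne : h y ≠ y) :
    ∃ x Q, 0 < Q ∧ (firstReturn h a)^[Q] x = x ∧ (∀ i, (firstReturn h a)^[i] x ∈ Ioo z a) ∧
      overRotNum h y = (crossings h a x Q : ℝ) / (Q + crossings h a x Q) := by
  have horb := H.iterate_mem_and_ne hy hper hne
  obtain ⟨p, hp, hpy⟩ := hper
  have hpy' : h^[p] y = y := hpy
  have hlt : ∀ i, h^[i] y ≤ a → h^[i] y < a := fun i hi =>
    lt_of_le_of_ne hi fun e => (horb i).2 (by rw [e, H.map_a])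
  obtain ⟨j, hja⟩ : ∃ j, h^[j] y < a := by
    by_cases hya : y ≤ a
    · exact ⟨0, hlt 0 hya⟩
    · exact ⟨1, H.map_lt_of_gt (not_le.1 hya) hy.2⟩
  have hmem : ∀ i, (firstReturn h a)^[i] (h^[j] y) < a ∧
      ∃ l, (firstReturn h a)^[i] (h^[j] y) = h^[l] y := by
    intro i
    induction i with
    | zero => exact ⟨hja, j, rfl⟩
    | succ i ih =>
      obtain ⟨ih1, l, ih2⟩ := ih
      rw [Function.iterate_succ_apply', ih2]
      by_cases hM : h (h^[l] y) ≤ a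
      · rw [firstReturn, if_pos hM]
        rw [← Function.iterate_succ_apply' h] at hM ⊢
        exact ⟨hlt _ hM, _, rfl⟩
      · rw [firstReturn, if_neg hM]
        have hw := (horb (l + 1)).1.2
        rw [Function.iterate_succ_apply'] at hw
        exact ⟨H.map_lt_of_gt (not_le.1 hM) hw, l + 2,
          by rw [Function.iterate_succ_apply', Function.iterate_succ_apply']⟩
  have hIoo : ∀ i, (firstReturn h a)^[i] (h^[j] y) ∈ Ioo z a := by
    intro i
    obtain ⟨h1, l, h2⟩ := hmem i
    refine ⟨?_, h1⟩
    rw [h2]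
    exact lt_of_le_of_ne (horb l).1.1 fun e => (horb l).2 (by rw [← e, H.map_z])
  have hpj : h^[p] (h^[j] y) = h^[j] y := by
    rw [← Function.iterate_add_apply, add_comm, Function.iterate_add_apply, hpy']
  obtain ⟨n, hn⟩ := exists_crossings_eq (h := h) (a := a) (h^[j] y) p
  have hit := H.iterate_eq_and_birkhoffSum_eq hIoo n
  rcases hn with hn | ⟨hn, hM⟩
  · have hn0 : 0 < n := by
      rcases Nat.eq_zero_or_pos n with rfl | h0
      · simp [crossings] at hn
        omega
      · exact h0
    refine ⟨h^[j] y, n, hn0, ?_, hIoo, ?_⟩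
    · rw [← hit.1, hn, hpj]
    · have hS : ∀ i, birkhoffSum h (chi h) p (h^[i] y) = birkhoffSum h (chi h) p y := by
        intro i
        induction i with
        | zero => rfl
        | succ i ih =>
          have h1 : h^[p] (h^[i] y) = h^[i] y := by
            rw [← Function.iterate_add_apply, add_comm, Function.iterate_add_apply, hpy']
          have h2 := birkhoffSum_apply_sub_birkhoffSum h (chi h) p (h^[i] y)
          rw [h1, sub_self, sub_eq_zero] at h2
          rw [Function.iterate_succ_apply', h2, ih]
      rw [overRotNum_eq_birkhoffSum_div hp hpy', ← hS j, ← hn, hit.2]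
      push_cast
      rfl
  · exfalso
    rw [← hit.1, ← Function.iterate_succ_apply' h, Nat.succ_eq_add_one, hn, hpj] at hM
    exact lt_asymm hM hja

end UnimodalMap

/-- A monotone generalized inverse of a continuous monotone function on `[u, v]`. -/
theorem exists_generalized_inverse {u v : ℝ} (huv : u ≤ v) {k : ℝ → ℝ}
    (hk : ContinuousOn k (Icc u v)) :
    ∃ ψ : ℝ → ℝ, Monotone ψ ∧ (∀ y, ψ y ∈ Icc u v) ∧
      (∀ x ∈ Icc u v, ∀ y, k x ≤ y → x ≤ ψ y) ∧
      (∀ y, k u ≤ y → y ≤ k v → k (ψ y) = y) := by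
  let S : ℝ → Set ℝ := fun y => {u} ∪ (Icc u v ∩ {x | k x ≤ y})
  have hSsub : ∀ y, S y ⊆ Icc u v := by
    rintro y x (rfl | hx)
    · exact ⟨le_rfl, huv⟩
    · exact hx.1
  have hSne : ∀ y, (S y).Nonempty := fun y => ⟨u, Or.inl rfl⟩
  have hSbdd : ∀ y, BddAbove (S y) := fun y => bddAbove_Icc.mono (hSsub y)
  have hScl : ∀ y, IsClosed (S y) := fun y =>
    isClosed_singleton.union (hk.preimage_isClosed_of_isClosed isClosed_Icc isClosed_Iic)
  have hmem : ∀ y, sSup (S y) ∈ S y := fun y => (hScl y).csSup_mem (hSne y) (hSbdd y)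
  have hle : ∀ x ∈ Icc u v, ∀ y, k x ≤ y → x ≤ sSup (S y) := fun x hx y hxy =>
    le_csSup (hSbdd y) (Or.inr ⟨hx, hxy⟩)
  refine ⟨fun y => sSup (S y), ?_, fun y => hSsub y (hmem y), hle, ?_⟩
  · intro y y' hyy
    refine csSup_le_csSup (hSbdd y') (hSne y) ?_
    rintro x (hx | hx)
    · exact Or.inl hx
    · exact Or.inr ⟨hx.1, le_trans hx.2 hyy⟩
  · intro y h1 h2
    have hψ : k (sSup (S y)) ≤ y := by
      rcases hmem y with e | e
      · rw [mem_singleton_iff.1 e]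
        exact h1
      · exact e.2
    have hI := hSsub y (hmem y)
    obtain ⟨x, hx, hxy⟩ := intermediate_value_Icc hI.2
      (hk.mono (Icc_subset_Icc hI.1 le_rfl)) ⟨hψ, h2⟩
    have := hle x ⟨hI.1.trans hx.1, hx.2⟩ y hxy.le
    rw [le_antisymm this hx.1] at hxy
    exact hxy

/-- A monotone system of equations `Y i = Ψ i (Y (σ i))` has a greatest solution, which
dominates every subsolution. -/
theorem exists_greatest_solution {ι : Type*} {z a : ℝ} (σ : ι → ι)
    (Ψ : ι → ℝ → ℝ) (hmono : ∀ i, Monotone (Ψ i)) (hmem : ∀ i y, Ψ i y ∈ Icc z a) :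
    ∃ Y : ι → ℝ, (∀ i, Y i = Ψ i (Y (σ i))) ∧
      ∀ X : ι → ℝ, (∀ i, X i ≤ Ψ i (X (σ i))) → X ≤ Y := by
  let S : Set (ι → ℝ) := {X | ∀ i, X i ≤ Ψ i (X (σ i))}
  have hne : S.Nonempty := ⟨fun _ => z, fun i => (hmem i _).1⟩
  have hbdd : BddAbove S := ⟨fun _ => a, fun X hX i => (hX i).trans (hmem i _).2⟩
  have hsub : sSup S ∈ S := by
    intro i
    suffices sSup S ≤ fun i => Ψ i (sSup S (σ i)) from this i
    exact csSup_le hne fun X hX i => (hX i).trans (hmono i (le_csSup hbdd hX (σ i)))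
  refine ⟨sSup S, fun i => le_antisymm (hsub i) ?_, fun X hX => le_csSup hbdd hX⟩
  have hT : (fun i => Ψ i (sSup S (σ i))) ∈ S := fun i => hmono i (hsub (σ i))
  exact le_csSup hbdd hT i

namespace UnimodalMap

variable {h : ℝ → ℝ} {z w c a A : ℝ}

/-- A periodic itinerary realized on the branches `[z, A]` and `[c, a]` of the first return map is
a genuine cycle. -/
theorem firstReturn_cycle_of_itinerary (H : UnimodalMap h z w c a A) {v : ℕ → ℝ} {s : ℕ → Prop}
    [DecidablePred s] {Q : ℕ} (hper : ∀ n, v (n + Q) = v n)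
    (hL : ∀ n, ¬ s n → v n ∈ Icc z A ∧ h (v n) = v (n + 1))
    (hM : ∀ n, s n → v n ∈ Icc c a ∧ h (h (v n)) = v (n + 1))
    (h0 : 0 < Nat.count s Q) (h1 : Nat.count s Q < Q) :
    (firstReturn h a)^[Q] (v 0) = v 0 ∧ (∀ i, (firstReturn h a)^[i] (v 0) ∈ Ioo z a) ∧
      crossings h a (v 0) Q = Nat.count s Q := by
  have zA := H.lt_A
  have Ac := H.A_lt
  have ca := H.c_lt
  obtain ⟨l, hlQ, hl⟩ : ∃ l < Q, ¬ s l := by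
    by_contra! hcon
    exact h1.ne (Nat.count_iff_forall.2 fun {n} hn => hcon n hn)
  obtain ⟨m, hmQ, hm⟩ : ∃ m < Q, s m := by
    by_contra! hcon
    exact h0.ne' (Nat.count_iff_forall_not.2 fun {n} hn => hcon n hn)
  have hmem : ∀ n, v n ∈ Icc z a := by
    intro n
    by_cases hs : s n
    · exact ⟨by linarith [(hM n hs).1.1], (hM n hs).1.2⟩
    · exact ⟨(hL n hs).1.1, by linarith [(hL n hs).1.2]⟩
  have hperm : ∀ n r, v (n + Q * r) = v n := by
    intro n r
    induction r with
    | zero => rfl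
    | succ r ih => rw [Nat.mul_succ, ← add_assoc, hper, ih]
  have hne : ∀ n, h (v n) ≠ v n := by
    intro n hn
    have hst : ∀ i, v (n + i) = v n := by
      intro i
      induction i with
      | zero => rfl
      | succ i ih =>
        by_cases hs : s (n + i)
        · rw [← add_assoc, ← (hM _ hs).2, ih, hn, hn]
        · rw [← add_assoc, ← (hL _ hs).2, ih, hn]
    have hall : ∀ j, v j = v n := by
      intro j
      have hnq : n ≤ Q * n := Nat.le_mul_of_pos_left n (by omega)
      have := hst (j + Q * n - n)
      rw [← this, show n + (j + Q * n - n) = j + Q * n by omega, hperm]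
    have e1 := (hL l hl).1.2
    have e2 := (hM m hm).1.1
    rw [hall] at e1 e2
    linarith
  have hIoo : ∀ n, v n ∈ Ioo z a := by
    intro n
    refine ⟨lt_of_le_of_ne (hmem n).1 fun e => hne n ?_, lt_of_le_of_ne (hmem n).2 fun e => hne n ?_⟩
    · rw [← e, H.map_z]
    · rw [e, H.map_a]
  have hcross : ∀ n, a < h (v n) ↔ s n := by
    intro n
    by_cases hs : s n
    · exact iff_of_true (H.lt_map_of_gt_A (by linarith [(hM n hs).1.1]) (hIoo n).2) hs
    · exact iff_of_false (not_lt.2 (H.map_le_of_le_A (hL n hs).1.1 (hL n hs).1.2)) hs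
  have hit : ∀ n, (firstReturn h a)^[n] (v 0) = v n := by
    intro n
    induction n with
    | zero => rfl
    | succ n ih =>
      rw [Function.iterate_succ_apply', ih, firstReturn]
      by_cases hs : s n
      · rw [if_neg (not_le.2 ((hcross n).2 hs)), (hM n hs).2]
      · rw [if_pos (not_lt.1 fun hh => hs ((hcross n).1 hh)), (hL n hs).2]
  refine ⟨by rw [hit, ← hper 0, zero_add], fun i => by rw [hit]; exact hIoo i, ?_⟩
  unfold crossings
  congr 1
  ext i
  rw [hit, hcross]

end UnimodalMap

/-- Two unimodal maps with the same turning point and the same fixed point, such that `h` moves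
points to the right more slowly than `g` along both increasing branches of the first return. -/
structure Slower (h g : ℝ → ℝ) (z w z₀ w₀ c a A B : ℝ) : Prop where
  left : UnimodalMap h z w c a A
  right : UnimodalMap g z₀ w₀ c a B
  B_le : B ≤ A
  z_le : z₀ ≤ z
  le_of_le_B : ∀ x ∈ Icc z B, h x ≤ g x
  ge_of_mem : ∀ x ∈ Icc c a, g x ≤ h x
  le_of_ge_a : ∀ x ∈ Icc a (h c), h x ≤ g x

namespace Slower

variable {h g : ℝ → ℝ} {z w z₀ w₀ c a A B : ℝ}

theorem sq_le_sq (S : Slower h g z w z₀ w₀ c a A B) {x : ℝ} (hx : x ∈ Icc c a) :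
    h (h x) ≤ g (g x) := by
  have h1 := S.left.lt_A
  have h2 := S.left.A_lt
  have h3 := S.left.c_lt
  have h4 := S.left.a_le
  have hgx : a ≤ g x := by
    have := S.right.anti.antitoneOn ⟨hx.1, hx.2.trans S.right.a_le⟩ ⟨h3.le, S.right.a_le⟩ hx.2
    rwa [S.right.map_a] at this
  have hhx := S.ge_of_mem x hx
  have htop := S.left.map_le_top (x := x) ⟨by linarith [hx.1], by linarith [hx.2]⟩
  have hw : h c ≤ w := (S.left.maps ⟨by linarith, by linarith⟩).2
  exact (S.left.anti.antitoneOn ⟨by linarith, by linarith⟩ ⟨by linarith, by linarith⟩ hhx).trans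
    (S.le_of_ge_a _ ⟨hgx, by linarith⟩)

theorem bottom_le (S : Slower h g z w z₀ w₀ c a A B) {x : ℝ} (hx : x ∈ Icc z₀ w₀)
    (hgx : a ≤ g x) : h (h c) ≤ g (g x) := by
  have h3 := S.left.c_lt
  have h4 := S.left.a_le
  have htop := S.right.map_le_top hx
  have hwg := (S.right.maps hx).2
  have hc := S.ge_of_mem c ⟨le_rfl, h3.le⟩
  have hw : h c ≤ w := (S.left.maps ⟨by linarith [S.left.lt_A, S.left.A_lt], by linarith⟩).2
  exact (S.left.anti.antitoneOn ⟨by linarith, by linarith⟩ ⟨by linarith, by linarith⟩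
    (htop.trans hc)).trans (S.le_of_ge_a _ ⟨hgx, by linarith⟩)

theorem bottom_mem (S : Slower h g z w z₀ w₀ c a A B) : h (h c) ∈ Icc z a := by
  have h1 := S.left.lt_A
  have h2 := S.left.A_lt
  have h3 := S.left.c_lt
  have h4 := S.left.a_le
  have hc : c ∈ Icc z w := ⟨by linarith, by linarith⟩
  refine ⟨(S.left.maps (S.left.maps hc)).1, (S.left.map_lt_of_gt ?_ (S.left.maps hc).2).le⟩
  exact S.left.lt_map_of_gt_A h2 h3

end Slower

/-- Monotone inverse branches of the first return map of `h`. -/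
theorem UnimodalMap.exists_inverse_branches {h : ℝ → ℝ} {z w c a A : ℝ}
    (H : UnimodalMap h z w c a A) : ∃ ψL ψM : ℝ → ℝ, Monotone ψL ∧ Monotone ψM ∧
      (∀ y, ψL y ∈ Icc z A) ∧ (∀ y, ψM y ∈ Icc c a) ∧
      (∀ x ∈ Icc z A, ∀ y, h x ≤ y → x ≤ ψL y) ∧ (∀ x ∈ Icc c a, ∀ y, h (h x) ≤ y → x ≤ ψM y) ∧
      (∀ y ∈ Icc z a, h (ψL y) = y) ∧ (∀ y ∈ Icc (h (h c)) a, h (h (ψM y)) = y) := by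
  have h1 := H.lt_A
  have h2 := H.A_lt
  have h3 := H.c_lt
  have h4 := H.a_le
  obtain ⟨ψL, l1, l2, l3, l4⟩ := exists_generalized_inverse h1.le
    (H.cont.mono (Icc_subset_Icc le_rfl (by linarith)))
  obtain ⟨ψM, m1, m2, m3, m4⟩ := exists_generalized_inverse (k := h ∘ h) h3.le
    ((H.cont.comp H.cont H.maps).mono (Icc_subset_Icc (by linarith) (by linarith)))
  refine ⟨ψL, ψM, l1, m1, l2, m2, l3, m3, fun y hy => l4 y ?_ ?_, fun y hy => m4 y hy.1 ?_⟩
  · rw [H.map_z]; exact hy.1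
  · rw [H.map_A]; exact hy.2
  · simp only [comp_apply, H.map_a]; exact hy.2

/-- The rotation by `q` on `{0, …, k + q - 1}`, with wrapping at `k`. -/
def rotStep (k q j : ℕ) : ℕ := if j < k then j + q else j - k

theorem rotStep_iterate (k q n : ℕ) (hq : 0 < q) :
    n * q = (k + q) * Nat.count (fun i => k ≤ (rotStep k q)^[i] 0) n + (rotStep k q)^[n] 0 ∧
      (rotStep k q)^[n] 0 < k + q := by
  induction n with
  | zero => simp; omega
  | succ n ih =>
    obtain ⟨ih1, ih2⟩ := ih
    rw [Nat.count_succ, Function.iterate_succ_apply']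
    set j := (rotStep k q)^[n] 0
    by_cases hj : j < k
    · rw [if_neg (not_le.2 hj), rotStep, if_pos hj, Nat.succ_mul, add_zero]
      omega
    · rw [if_pos (not_lt.1 hj), rotStep, if_neg hj, Nat.succ_mul, Nat.mul_succ]
      omega

theorem rotStep_cycle (k q : ℕ) (hq : 0 < q) : (rotStep k q)^[k + q] 0 = 0 ∧
    Nat.count (fun i => k ≤ (rotStep k q)^[i] 0) (k + q) = q := by
  obtain ⟨h1, h2⟩ := rotStep_iterate k q (k + q) hq
  have h3 : (rotStep k q)^[k + q] 0 = 0 := by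
    refine Nat.eq_zero_of_dvd_of_lt ?_ h2
    exact (Nat.dvd_add_right (Nat.dvd_mul_right _ _)).1 (h1 ▸ Nat.dvd_mul_right _ _)
  refine ⟨h3, ?_⟩
  rw [h3, add_zero] at h1
  exact (Nat.eq_of_mul_eq_mul_left (by omega) h1).symm

namespace Slower

variable {h g : ℝ → ℝ} {z w z₀ w₀ c a A B : ℝ}

/-- A cycle of `g` avoiding the decreasing branch `(B, c)` of the first return forces a cycle
of `h` with the same itinerary. -/
theorem transfer (S : Slower h g z w z₀ w₀ c a A B) {X : ℕ → ℝ} {s : ℕ → Prop} [DecidablePred s]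
    {Q : ℕ} (hX : ∀ n, X (n + Q) = X n) (hs : ∀ n, s (n + Q) ↔ s n)
    (hb : ∀ n, h (h c) ≤ X n)
    (hL : ∀ n, ¬ s n → X n ∈ Icc z B ∧ g (X n) = X (n + 1))
    (hM : ∀ n, s n → X n ∈ Icc c a ∧ g (g (X n)) = X (n + 1))
    (h0 : 0 < Nat.count s Q) (h1 : Nat.count s Q < Q) :
    ∃ y, (firstReturn h a)^[Q] y = y ∧ (∀ i, (firstReturn h a)^[i] y ∈ Ioo z a) ∧
      crossings h a y Q = Nat.count s Q := by
  obtain ⟨ψL, ψM, l1, m1, l2, m2, l3, m3, l4, m4⟩ := S.left.exists_inverse_branches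
  have zA := S.left.lt_A
  have Ac := S.left.A_lt
  have ca := S.left.c_lt
  have hXmod : ∀ n, X (n % Q) = X n := (show Function.Periodic X Q from hX).map_mod_nat
  have hsmod : ∀ n, s (n % Q) ↔ s n := fun n => by
    have := (show Function.Periodic s Q from fun n => propext (hs n)).map_mod_nat n
    rw [this]
  have hψ : ∀ i y, (if s i then ψM y else ψL y) ∈ Icc z a := by
    intro i y
    split_ifs
    · exact ⟨by linarith [(m2 y).1], (m2 y).2⟩
    · exact ⟨(l2 y).1, by linarith [(l2 y).2]⟩
  obtain ⟨Y, hY, hYmax⟩ := exists_greatest_solution (fun n => (n + 1) % Q)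
    (fun i y => if s i then ψM y else ψL y)
    (fun i => by by_cases hi : s i <;> simp only [hi, if_true, if_false] <;> assumption) hψ
  have hXY : X ≤ Y := by
    refine hYmax X fun i => ?_
    simp only [hXmod]
    split_ifs with hi
    · obtain ⟨e1, e2⟩ := hM i hi
      exact m3 _ e1 _ ((S.sq_le_sq e1).trans e2.le)
    · obtain ⟨e1, e2⟩ := hL i hi
      exact l3 _ ⟨e1.1, e1.2.trans S.B_le⟩ _ ((S.le_of_le_B _ e1).trans e2.le)
  have hYmem : ∀ i, Y i ∈ Icc z a := fun i => by rw [hY]; exact hψ _ _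
  refine ⟨Y (0 % Q), S.left.firstReturn_cycle_of_itinerary (v := fun n => Y (n % Q)) (s := s)
    (fun n => by simp) (fun n hn => ?_) (fun n hn => ?_) h0 h1⟩
  · have hn' := mt (hsmod n).1 hn
    have e := hY (n % Q)
    simp only [if_neg hn', Nat.mod_add_mod] at e
    simp only [e]
    exact ⟨l2 _, l4 _ (hYmem _)⟩
  · have hn' := (hsmod n).2 hn
    have e := hY (n % Q)
    simp only [if_pos hn', Nat.mod_add_mod] at e
    simp only [e]
    exact ⟨m2 _, m4 _ ⟨(hb _).trans (hXY _), (hYmem _).2⟩⟩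

/-- If `h` has a monotone rotation by `q` that falls below the bottom `h (h c)`, then any cycle
of `g` with the same rotation avoids the decreasing branch `(B, c)` of the first return. -/
theorem avoids (S : Slower h g z w z₀ w₀ c a A B) {X : ℕ → ℝ} {s : ℕ → Prop} [DecidablePred s]
    {k q : ℕ} (hX : X (k + q) = X 0) (hb : ∀ n, h (h c) ≤ X n) (hXa : ∀ n, X n ≤ a)
    (hL : ∀ n, ¬ s n → X n ≤ B ∧ g (X n) = X (n + 1))
    (hM : ∀ n, s n → g (g (X n)) = X (n + 1))
    (hcount : Nat.count s (k + q) = q) {Y : ℕ → ℝ} (hYmono : Monotone Y) (hYz : ∀ n, z ≤ Y n)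
    (hYL : ∀ j < k, h (Y j) = Y (j + q)) (hYk : c ≤ Y k)
    (hYM : ∀ j, Y (j + k) ≤ a → Y j ≤ h (h (Y (j + k)))) (hY0 : Y 0 < h (h c)) :
    ∀ n < k + q, s n → c ≤ X n := by
  have zA := S.left.lt_A
  have Ac := S.left.A_lt
  have ca := S.left.c_lt
  have aw := S.left.a_le
  have hBA := S.B_le
  classical
  let N : ℝ → ℕ := fun x => Nat.findGreatest (fun n => ∀ j < n, Y j ≤ x) (k + q)
  have hNle : ∀ x, N x ≤ k + q := fun x => Nat.findGreatest_le _
  have hNspec : ∀ x, ∀ j < N x, Y j ≤ x := fun x =>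
    Nat.findGreatest_spec (P := fun n => ∀ j < n, Y j ≤ x) (m := 0) (Nat.zero_le _)
      (fun j hj => absurd hj (Nat.not_lt_zero j))
  have hNge : ∀ x n, n ≤ k + q → (∀ j < n, Y j ≤ x) → n ≤ N x := fun x n hn hj =>
    Nat.le_findGreatest (P := fun n => ∀ j < n, Y j ≤ x) hn hj
  have hNk : ∀ x < c, N x ≤ k := by
    intro x hx
    by_contra! hcon
    linarith [hNspec x k hcon]
  intro i₀ hi₀ hsi₀
  by_contra! hlt
  have hq : 0 < q := by
    rw [← hcount]
    exact Nat.pos_of_ne_zero fun e => Nat.count_iff_forall_not.1 e i₀ hi₀ hsi₀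
  have hN1 : ∀ n, 1 ≤ N (X n) := fun n => hNge _ _ (by omega) fun j hj => by
    obtain rfl : j = 0 := by omega
    exact hY0.le.trans (hb n)
  have stepL : ∀ n, ¬ s n → N (X n) + q ≤ N (X (n + 1)) := by
    intro n hn
    obtain ⟨e1, e2⟩ := hL n hn
    have hk := hNk (X n) (by linarith)
    have hzX : z ≤ X n := (hYz 0).trans (hY0.le.trans (hb n))
    have hmain : ∀ i < N (X n), Y (i + q) ≤ X (n + 1) := by
      intro i hi
      have hYi := hNspec _ i hi
      rw [← hYL i (by omega), ← e2]
      exact (S.left.mono.monotoneOn ⟨hYz i, by linarith⟩ ⟨hzX, by linarith⟩ hYi).trans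
        (S.le_of_le_B _ ⟨hzX, e1⟩)
    refine hNge _ _ (by omega) fun j hj => ?_
    rcases lt_or_ge j q with hjq | hjq
    · exact (hYmono (by omega : j ≤ 0 + q)).trans (hmain 0 (hN1 n))
    · obtain ⟨i, rfl⟩ := Nat.exists_eq_add_of_le' hjq
      exact hmain i (by omega)
  have stepM' : ∀ n, X n < c → N (X n) < N (X (n + 1)) + k := by
    intro n hn
    have := hNk _ hn
    have := hN1 (n + 1)
    omega
  have stepM : ∀ n, s n → N (X n) ≤ N (X (n + 1)) + k := by
    intro n hn
    rcases lt_or_ge (X n) c with hc | hc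
    · exact (stepM' n hc).le
    · suffices N (X n) - k ≤ N (X (n + 1)) by omega
      refine hNge _ _ (by have := hNle (X n); omega) fun j hj => ?_
      have hY := hNspec (X n) (j + k) (by omega)
      have hYc : c ≤ Y (j + k) := hYk.trans (hYmono (by omega))
      have hXn := hXa n
      rw [← hM n hn]
      refine (hYM j (hY.trans hXn)).trans (le_trans ?_ (S.sq_le_sq ⟨hc, hXn⟩))
      have hhX : a ≤ h (X n) := by
        have := S.left.anti.antitoneOn ⟨hc, by linarith⟩ ⟨ca.le, aw⟩ hXn
        rwa [S.left.map_a] at this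
      have hhY := S.left.anti.antitoneOn ⟨hYc, by linarith⟩ ⟨hc, by linarith⟩ hY
      have hw := (S.left.maps (x := Y (j + k)) ⟨by linarith, by linarith⟩).2
      exact S.left.anti.antitoneOn ⟨by linarith, by linarith⟩ ⟨by linarith, hw⟩ hhY
  have hsum : ∀ n, N (X 0) + q * n + (if i₀ < n then 1 else 0) ≤
      N (X n) + (k + q) * Nat.count s n := by
    intro n
    induction n with
    | zero => simp
    | succ n ih =>
      rw [Nat.count_succ, Nat.mul_succ]
      by_cases hn : s n
      · have e := stepM n hn
        rw [if_pos hn, Nat.mul_succ]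
        rcases eq_or_ne i₀ n with rfl | hne
        · have e' := stepM' i₀ hlt
          simp at ih ⊢
          omega
        · split_ifs at ih ⊢ <;> omega
      · have e := stepL n hn
        have hne : i₀ ≠ n := fun e => hn (e ▸ hsi₀)
        simp only [if_neg hn, add_zero]
        split_ifs at ih ⊢ <;> omega
  have := hsum (k + q)
  rw [hX, hcount, if_pos hi₀, mul_comm q] at this
  omega

end Slower

namespace Slower

variable {h g : ℝ → ℝ} {z w z₀ w₀ c a A B : ℝ}

/-- A return of `g` on `(B, a)` that does not move right forces a nonzero fixed point of the
first return map of `h`, that is, a cycle of period two. -/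
theorem exists_fixed (S : Slower h g z w z₀ w₀ c a A B) {u : ℝ} (hBu : B < u) (hua : u < a)
    (hu : g (g u) ≤ u) : ∃ y ∈ Ioo A a, h (h y) = y := by
  have zA := S.left.lt_A
  have Ac := S.left.A_lt
  have ca := S.left.c_lt
  have aw := S.left.a_le
  obtain ⟨e, hce, hea, he⟩ : ∃ e, c ≤ e ∧ e < a ∧ h (h e) ≤ e := by
    rcases le_total c u with hcu | huc
    · exact ⟨u, hcu, hua, (S.sq_le_sq ⟨hcu, hua.le⟩).trans hu⟩
    · refine ⟨c, le_rfl, ca, (S.bottom_le ⟨?_, ?_⟩ ?_).trans (hu.trans huc)⟩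
      · linarith [S.right.lt_A]
      · linarith [S.right.a_le]
      · exact (S.right.lt_map_of_gt_A hBu hua).le
  have hcont : ContinuousOn (fun y => h (h y) - y) (Icc A e) :=
    ((S.left.cont.comp S.left.cont S.left.maps).mono
      (Icc_subset_Icc zA.le (by linarith))).sub continuousOn_id
  have hA : h (h A) = a := by rw [S.left.map_A, S.left.map_a]
  obtain ⟨y, hy, hy0⟩ := intermediate_value_Icc' (by linarith) hcont
    (show (0 : ℝ) ∈ Icc _ _ from ⟨by linarith, by linarith⟩)
  have hy0' : h (h y) = y := sub_eq_zero.1 hy0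
  refine ⟨y, ⟨lt_of_le_of_ne hy.1 ?_, by linarith [hy.2]⟩, hy0'⟩
  rintro rfl
  linarith

/-- If no point of an `h`-rotation with `q` crossings out of `k + q` falls below `h (h c)`, it is
a cycle of `h`; otherwise every `g`-cycle with these numbers can be transferred to `h`. -/
theorem exists_cycle_of_count (S : Slower h g z w z₀ w₀ c a A B) {X : ℕ → ℝ} {s : ℕ → Prop}
    [DecidablePred s] {k q : ℕ} (hk : 0 < k) (hq : 0 < q)
    (hX : ∀ n, X (n + (k + q)) = X n) (hs : ∀ n, s (n + (k + q)) ↔ s n)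
    (hb : ∀ n, h (h c) ≤ X n) (hXa : ∀ n, X n ≤ a)
    (hL : ∀ n, ¬ s n → X n ≤ B ∧ g (X n) = X (n + 1))
    (hM : ∀ n, s n → g (g (X n)) = X (n + 1)) (hcount : Nat.count s (k + q) = q) :
    ∃ y, (firstReturn h a)^[k + q] y = y ∧ (∀ i, (firstReturn h a)^[i] y ∈ Ioo z a) ∧
      crossings h a y (k + q) = q := by
  obtain ⟨ψL, ψM, l1, m1, l2, m2, l3, m3, l4, m4⟩ := S.left.exists_inverse_branches
  have zA := S.left.lt_A
  have Ac := S.left.A_lt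
  have ca := S.left.c_lt
  have aw := S.left.a_le
  let Ψ : ℕ → ℝ → ℝ := fun j y => if j < k then ψL y else ψM y
  have hΨ : ∀ i y, Ψ i y ∈ Icc z a := by
    intro i y
    simp only [Ψ]
    split_ifs
    · exact ⟨(l2 y).1, by linarith [(l2 y).2]⟩
    · exact ⟨by linarith [(m2 y).1], (m2 y).2⟩
  have hΨmono : ∀ i, Monotone (Ψ i) := fun i => by
    by_cases hi : i < k <;> simp only [Ψ, hi, if_true, if_false] <;> assumption
  obtain ⟨Y, hY, hYmax⟩ := exists_greatest_solution (rotStep k q) Ψ hΨmono hΨ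
  have hYmem : ∀ i, Y i ∈ Icc z a := fun i => by rw [hY]; exact hΨ _ _
  have hYL : ∀ j < k, Y j = ψL (Y (j + q)) := fun j hj => by
    rw [hY]; simp [Ψ, rotStep, hj]
  have hYM : ∀ j, k ≤ j → Y j = ψM (Y (j - k)) := fun j hj => by
    rw [hY]; simp [Ψ, rotStep, not_lt.2 hj]
  have hYmono : Monotone Y := by
    suffices ∀ j, partialSups Y j ≤ Y j from fun i j hij =>
      (le_partialSups_of_le Y hij).trans (this j)
    refine hYmax _ fun j => ?_
    obtain ⟨i, hij, hi⟩ := exists_partialSups_eq Y j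
    rw [hi, hY i]
    refine (hΨmono i (le_partialSups Y _)).trans ?_
    have hZ := (partialSups Y).monotone
    by_cases hj : j < k
    · have hi : i < k := hij.trans_lt hj
      simp only [Ψ, rotStep, hi, hj, if_true]
      exact l1 (hZ (by omega))
    · by_cases hi : i < k
      · simp only [Ψ, hi, hj, if_true, if_false]
        exact (l2 _).2.trans (Ac.le.trans (m2 _).1)
      · simp only [Ψ, rotStep, hi, hj, if_false]
        exact m1 (hZ (by omega))
  rcases le_or_gt (h (h c)) (Y 0) with hY0 | hY0
  · obtain ⟨r1, r2⟩ := rotStep_cycle k q hq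
    obtain ⟨e1, e2, e3⟩ := S.left.firstReturn_cycle_of_itinerary
      (v := fun n => Y ((rotStep k q)^[n] 0)) (s := fun i => k ≤ (rotStep k q)^[i] 0)
      (Q := k + q) (fun n => by simp only [Function.iterate_add_apply, r1])
      (fun n hn => by
        rw [Function.iterate_succ_apply', rotStep, if_pos (not_le.1 hn)]
        rw [hYL _ (not_le.1 hn)]
        exact ⟨l2 _, l4 _ (hYmem _)⟩)
      (fun n hn => by
        rw [Function.iterate_succ_apply', rotStep, if_neg (not_lt.2 hn)]
        rw [hYM _ hn]
        exact ⟨m2 _, m4 _ ⟨hY0.trans (hYmono (Nat.zero_le _)), (hYmem _).2⟩⟩)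
      (by rw [r2]; exact hq) (by rw [r2]; omega)
    exact ⟨_, e1, e2, e3.trans r2⟩
  · have hav := S.avoids (by simpa using hX 0) hb hXa hL hM hcount hYmono (fun n => (hYmem n).1)
      (fun j hj => by rw [hYL j hj]; exact l4 _ (hYmem _))
      (by rw [hYM k le_rfl]; exact (m2 _).1)
      (fun j _ => by
        rw [hYM (j + k) (by omega), Nat.add_sub_cancel]
        have hhc : ∀ y, h (h c) ≤ h (h (ψM y)) := fun y => by
          have hy := m2 y
          have e1 := S.left.map_le_top (x := ψM y) ⟨by linarith [hy.1], by linarith [hy.2]⟩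
          have e2 := S.left.anti.antitoneOn ⟨hy.1, by linarith [hy.2]⟩ ⟨ca.le, aw⟩ hy.2
          rw [S.left.map_a] at e2
          have e3 := (S.left.maps (x := c) ⟨by linarith, by linarith⟩).2
          exact S.left.anti.antitoneOn ⟨by linarith, by linarith⟩ ⟨by linarith, e3⟩ e1
        rcases le_or_gt (h (h c)) (Y j) with hj | hj
        · exact (m4 _ ⟨hj, (hYmem _).2⟩).ge
        · exact hj.le.trans (hhc _)) hY0
    have hsmod : ∀ n, s (n % (k + q)) ↔ s n := fun n => by
      have := (show Function.Periodic s (k + q) from fun n => propext (hs n)).map_mod_nat n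
      rw [this]
    have hXmod : ∀ n, X (n % (k + q)) = X n :=
      (show Function.Periodic X (k + q) from hX).map_mod_nat
    obtain ⟨y, e1, e2, e3⟩ := S.transfer hX hs hb
      (fun n hn => ⟨⟨S.bottom_mem.1.trans (hb n), (hL n hn).1⟩, (hL n hn).2⟩)
      (fun n hn => ⟨⟨by
        rw [← hXmod n]
        exact hav _ (Nat.mod_lt _ (by omega)) ((hsmod n).2 hn), hXa n⟩, hM n hn⟩)
      (by rw [hcount]; exact hq) (by rw [hcount]; omega)
    exact ⟨y, e1, e2, e3.trans hcount⟩

/-- Every cycle of the first return map of `g` is matched by one of `h` with the same length and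
the same number of crossings. -/
theorem exists_cycle (S : Slower h g z w z₀ w₀ c a A B) {x : ℝ} {Q : ℕ} (hQ : 0 < Q)
    (hcyc : (firstReturn g a)^[Q] x = x) (hx : ∀ i, (firstReturn g a)^[i] x ∈ Ioo z₀ a) :
    ∃ y, (firstReturn h a)^[Q] y = y ∧ (∀ i, (firstReturn h a)^[i] y ∈ Ioo z a) ∧
      crossings h a y Q = crossings g a x Q := by
  set X : ℕ → ℝ := fun n => (firstReturn g a)^[n] x with hXdef
  have hX : ∀ n, X (n + Q) = X n := fun n => by
    simp only [hXdef, Function.iterate_add_apply, hcyc]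
  have hXmod : ∀ n, X (n % Q) = X n := (show Function.Periodic X Q from hX).map_mod_nat
  have hL : ∀ n, ¬ a < g (X n) → X n ≤ B ∧ g (X n) = X (n + 1) := by
    intro n hn
    refine ⟨not_lt.1 fun hB => hn (S.right.lt_map_of_gt_A hB (hx n).2), ?_⟩
    simp only [hXdef, Function.iterate_succ_apply', firstReturn] at hn ⊢
    rw [if_pos (not_lt.1 hn)]
  have hM : ∀ n, a < g (X n) → g (g (X n)) = X (n + 1) := by
    intro n hn
    simp only [hXdef, Function.iterate_succ_apply', firstReturn] at hn ⊢
    rw [if_neg (not_le.2 hn)]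
  have hIcc : ∀ n, X n ∈ Icc z₀ w₀ := fun n => ⟨(hx n).1.le, (hx n).2.le.trans S.right.a_le⟩
  obtain ⟨n₀, -, hmin⟩ := Finset.exists_min_image (Finset.range Q) X ⟨0, Finset.mem_range.2 hQ⟩
  have hmin' : ∀ n, X n₀ ≤ X n := fun n => by
    rw [← hXmod n]
    exact hmin _ (Finset.mem_range.2 (Nat.mod_lt _ hQ))
  have hpred : X (n₀ + Q - 1 + 1) = X n₀ := by
    rw [show n₀ + Q - 1 + 1 = n₀ + Q by omega, hX]
  have hspred : a < g (X (n₀ + Q - 1)) := by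
    by_contra hn
    have e1 := (hL _ hn).2
    have e2 := S.right.lt_map _ (hx (n₀ + Q - 1))
    have e3 := hmin' (n₀ + Q - 1)
    rw [hpred] at e1
    exact absurd (e1 ▸ e2) (not_lt.2 e3)
  have hb : ∀ n, h (h c) ≤ X n := fun n => by
    refine le_trans ?_ (hmin' n)
    rw [← hpred, ← hM _ hspred]
    exact S.bottom_le (hIcc _) hspred.le
  have hcnt : crossings g a x Q = Nat.count (fun n => a < g (X n)) Q := rfl
  have hpos : 0 < crossings g a x Q := by
    rw [hcnt]
    refine Nat.pos_of_ne_zero fun e => Nat.count_iff_forall_not.1 e _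
      (Nat.mod_lt (n₀ + Q - 1) hQ) ?_
    rw [hXmod]
    exact hspred
  rcases (Nat.count_le (p := fun n => a < g (X n)) (n := Q)).eq_or_lt with hall | hlt
  · obtain ⟨n₁, hn₁, hmax⟩ :=
      Finset.exists_max_image (Finset.range Q) X ⟨0, Finset.mem_range.2 hQ⟩
    have hM₁ := Nat.count_iff_forall.1 hall n₁ (Finset.mem_range.1 hn₁)
    obtain ⟨y, hy, hyy⟩ := S.exists_fixed (u := X n₁)
      (not_le.1 fun hB => hM₁.not_ge (S.right.map_le_of_le_A (hIcc _).1 hB)) (hx n₁).2 (by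
        rw [hM _ hM₁, ← hXmod]
        exact hmax _ (Finset.mem_range.2 (Nat.mod_lt _ hQ)))
    have hgt := S.left.lt_map_of_gt_A hy.1 hy.2
    have hfix : ∀ n, (firstReturn h a)^[n] y = y := fun n =>
      Function.iterate_fixed (by rw [firstReturn, if_neg (not_le.2 hgt), hyy]) n
    refine ⟨y, hfix Q, fun i => by rw [hfix]; exact ⟨S.left.lt_A.trans hy.1, hy.2⟩, ?_⟩
    rw [hcnt, hall, crossings]
    exact Nat.count_iff_forall.2 fun n _ => by rw [hfix]; exact hgt
  · obtain ⟨k, hk⟩ := Nat.exists_eq_add_of_lt hlt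
    have hkQ : Q = (k + 1) + crossings g a x Q := by rw [hcnt]; omega
    have key := S.exists_cycle_of_count (X := X) (s := fun n => a < g (X n)) (k := k + 1)
      (q := crossings g a x Q) (Nat.succ_pos k) hpos
    rw [← hkQ] at key
    exact key hX (fun n => by rw [hX]) hb (fun n => (hx n).2.le) hL hM rfl

end Slower

/-- The conjugate of `f` by the homothety of ratio `l` centred at `c`. -/
noncomputable def rescale (c l : ℝ) (f : ℝ → ℝ) (x : ℝ) : ℝ := c + l * (f (c + (x - c) / l) - c)

theorem rescale_homothety {c l : ℝ} (hl : 0 < l) (f : ℝ → ℝ) (u : ℝ) :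
    rescale c l f (c + l * (u - c)) = c + l * (f u - c) := by
  rw [rescale, add_sub_cancel_left, mul_div_cancel_left₀ _ hl.ne', add_sub_cancel]

theorem homothety_le_homothety {c l u v : ℝ} (hl : 0 < l) :
    c + l * (u - c) ≤ c + l * (v - c) ↔ u ≤ v := by
  rw [add_le_add_iff_left, mul_le_mul_iff_right₀ hl, sub_le_sub_iff_right]

theorem homothety_lt_homothety {c l u v : ℝ} (hl : 0 < l) :
    c + l * (u - c) < c + l * (v - c) ↔ u < v := by
  rw [add_lt_add_iff_left, mul_lt_mul_iff_right₀ hl, sub_lt_sub_iff_right]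

theorem exists_homothety_eq {c l : ℝ} (hl : 0 < l) (x : ℝ) : ∃ u, c + l * (u - c) = x :=
  ⟨c + (x - c) / l, by rw [add_sub_cancel_left, mul_div_cancel₀ _ hl.ne', add_sub_cancel]⟩

theorem UnimodalMap.rescale {f : ℝ → ℝ} {z w c a A l : ℝ} (H : UnimodalMap f z w c a A)
    (hl : 0 < l) : UnimodalMap (rescale c l f) (c + l * (z - c)) (c + l * (w - c)) c
      (c + l * (a - c)) (c + l * (A - c)) where
  lt_A := (homothety_lt_homothety hl).2 H.lt_A
  A_lt := by nlinarith [H.A_lt]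
  c_lt := by nlinarith [H.c_lt]
  a_le := (homothety_le_homothety hl).2 H.a_le
  cont := by
    have hmaps : MapsTo (fun x => c + (x - c) / l) (Icc (c + l * (z - c)) (c + l * (w - c)))
        (Icc z w) := by
      intro x hx
      obtain ⟨u, rfl⟩ := exists_homothety_eq (c := c) hl x
      rw [mem_Icc, homothety_le_homothety hl, homothety_le_homothety hl] at hx
      simpa only [add_sub_cancel_left, mul_div_cancel_left₀ _ hl.ne', add_sub_cancel, mem_Icc] using hx
    have := H.cont.comp (f := fun x => c + (x - c) / l) (by fun_prop) hmaps
    exact continuousOn_const.add (continuousOn_const.mul (this.sub continuousOn_const))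
  maps := by
    intro x hx
    obtain ⟨u, rfl⟩ := exists_homothety_eq (c := c) hl x
    rw [rescale_homothety hl]
    rw [mem_Icc, homothety_le_homothety hl, homothety_le_homothety hl] at hx ⊢
    exact H.maps hx
  mono := by
    intro x hx y hy hxy
    obtain ⟨u, rfl⟩ := exists_homothety_eq (c := c) hl x
    obtain ⟨v, rfl⟩ := exists_homothety_eq (c := c) hl y
    rw [rescale_homothety hl, rescale_homothety hl, homothety_lt_homothety hl]
    rw [homothety_lt_homothety hl] at hxy
    refine H.mono ?_ ?_ hxy
    · exact ⟨(homothety_le_homothety hl).1 hx.1, by nlinarith [hx.2]⟩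
    · exact ⟨(homothety_le_homothety hl).1 hy.1, by nlinarith [hy.2]⟩
  anti := by
    intro x hx y hy hxy
    obtain ⟨u, rfl⟩ := exists_homothety_eq (c := c) hl x
    obtain ⟨v, rfl⟩ := exists_homothety_eq (c := c) hl y
    rw [rescale_homothety hl, rescale_homothety hl, homothety_lt_homothety hl]
    rw [homothety_lt_homothety hl] at hxy
    refine H.anti ?_ ?_ hxy
    · exact ⟨by nlinarith [hx.1], (homothety_le_homothety hl).1 hx.2⟩
    · exact ⟨by nlinarith [hy.1], (homothety_le_homothety hl).1 hy.2⟩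
  map_z := by rw [rescale_homothety hl, H.map_z]
  map_a := by rw [rescale_homothety hl, H.map_a]
  map_A := by rw [rescale_homothety hl, H.map_A]
  lt_map := by
    intro x hx
    obtain ⟨u, rfl⟩ := exists_homothety_eq (c := c) hl x
    rw [mem_Ioo, homothety_lt_homothety hl, homothety_lt_homothety hl] at hx
    rw [rescale_homothety hl, homothety_lt_homothety hl]
    exact H.lt_map u hx

/-- Cycles of the first return map are invariant under rescaling. -/
theorem firstReturn_rescale_iterate {c l : ℝ} (hl : 0 < l) (f : ℝ → ℝ) (a u : ℝ) (n : ℕ) :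
    (firstReturn (rescale c l f) (c + l * (a - c)))^[n] (c + l * (u - c)) =
      c + l * ((firstReturn f a)^[n] u - c) := by
  induction n with
  | zero => rfl
  | succ n ih =>
    simp only [Function.iterate_succ_apply', ih, firstReturn, rescale_homothety hl,
      homothety_le_homothety hl]
    split_ifs <;> rfl

theorem crossings_rescale {c l : ℝ} (hl : 0 < l) (f : ℝ → ℝ) (a u : ℝ) (n : ℕ) :
    crossings (rescale c l f) (c + l * (a - c)) (c + l * (u - c)) n = crossings f a u n := by
  simp only [crossings, firstReturn_rescale_iterate hl, rescale_homothety hl,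
    homothety_lt_homothety hl]

/-- Two unimodal maps of which one is slower than the other after rescaling have nested
over-rotation intervals. -/
theorem Slower.overRotInterval_subset {f g : ℝ → ℝ} {z w z₀ w₀ c a A B a' A' l : ℝ} (hl : 0 < l)
    (H : UnimodalMap f z w c a' A') (ha : c + l * (a' - c) = a)
    (S : Slower (rescale c l f) g (c + l * (z - c)) (c + l * (w - c)) z₀ w₀ c a A B) :
    overRotInterval g (Icc z₀ w₀) ⊆ overRotInterval f (Icc z w) := by
  refine closure_mono ?_
  rintro r ⟨y, hy, hper, hne, rfl⟩
  obtain ⟨x, Q, hQ, hcyc, hx, hrot⟩ := S.right.exists_firstReturn_cycle_of_periodic hy hper hne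
  obtain ⟨v, hv1, hv2, hv3⟩ := S.exists_cycle hQ hcyc hx
  obtain ⟨u, rfl⟩ := exists_homothety_eq (c := c) hl v
  subst ha
  simp only [firstReturn_rescale_iterate hl, crossings_rescale hl, mem_Ioo,
    homothety_lt_homothety hl] at hv1 hv2 hv3
  have hu : (firstReturn f a')^[Q] u = u :=
    le_antisymm ((homothety_le_homothety hl).1 hv1.le) ((homothety_le_homothety hl).1 hv1.ge)
  obtain ⟨e1, e2, e3⟩ := H.overRotNum_of_firstReturn_cycle hQ hu hv2
  exact ⟨u, ⟨(hv2 0).1.le, (hv2 0).2.le.trans H.a_le⟩, e1, e2, by rw [e3, hrot, hv3]⟩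

namespace SClass

variable {f g : ℝ → ℝ} {c a A : ℝ}

theorem unimodalMap (hf : SClass f c) (ha : a ∈ Ioo c 1) (hfa : f a = a) (hA : A ∈ Icc 0 c)
    (hfA : f A = a) : UnimodalMap f 0 1 c a A where
  lt_A := by
    refine lt_of_le_of_ne hA.1 ?_
    rintro rfl
    rw [hf.f0] at hfA
    linarith [hf.hc.1, ha.1]
  A_lt := by
    refine lt_of_le_of_ne hA.2 ?_
    rintro rfl
    have := hf.anti ⟨le_rfl, hf.hc.2.le⟩ ⟨ha.1.le, ha.2.le⟩ ha.1
    linarith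
  c_lt := ha.1
  a_le := ha.2.le
  cont := by
    rw [← Icc_union_Icc_eq_Icc hf.hc.1.le hf.hc.2.le]
    exact hf.smoothL.continuousOn.union_of_isClosed hf.smoothR.continuousOn isClosed_Icc
      isClosed_Icc
  maps := hf.maps
  mono := hf.mono
  anti := hf.anti
  map_z := hf.f0
  map_a := hfa
  map_A := hfA
  lt_map := by
    intro x hx
    have hc := hf.hc
    rcases le_or_gt x c with hxc | hxc
    · have hr : x / c ≤ 1 := (div_le_one hc.1).2 hxc
      have hr0 : 0 < x / c := div_pos hx.1 hc.1
      have := hf.concave.2 (x := 0) (y := c) ⟨le_rfl, zero_le_one⟩ ⟨hc.1.le, hc.2.le⟩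
        (sub_nonneg.2 hr) hr0.le (by ring)
      simp only [smul_eq_mul, mul_zero, zero_add, hf.f0] at this
      rw [div_mul_cancel₀ _ hc.1.ne'] at this
      refine lt_of_lt_of_le ?_ this
      calc x = x / c * c := (div_mul_cancel₀ _ hc.1.ne').symm
        _ < x / c * f c := mul_lt_mul_of_pos_left hf.fcgt hr0
    · have := hf.anti ⟨hxc.le, hx.2.le.trans ha.2.le⟩ ⟨ha.1.le, ha.2.le⟩ hx.2
      linarith [hx.2]

theorem differentiableAt_left (hf : SClass f c) {x : ℝ} (hx : x ∈ Ioo 0 c) :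
    DifferentiableAt ℝ f x :=
  (hf.smoothL.differentiableOn one_ne_zero).differentiableAt (Icc_mem_nhds hx.1 hx.2)

theorem differentiableAt_right (hf : SClass f c) {x : ℝ} (hx : x ∈ Ioo c 1) :
    DifferentiableAt ℝ f x :=
  (hf.smoothR.differentiableOn one_ne_zero).differentiableAt (Icc_mem_nhds hx.1 hx.2)

theorem derivWithin_left (hf : SClass f c) {x : ℝ} (hx : x ∈ Ioo 0 c) :
    derivWithin f (Icc 0 x) x = deriv f x ∧ 0 ≤ deriv f x := by
  have h1 : derivWithin f (Icc 0 x) x = deriv f x := (hf.differentiableAt_left hx).derivWithin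
    (uniqueDiffOn_Icc hx.1 x ⟨hx.1.le, le_rfl⟩)
  exact ⟨h1, h1 ▸ (hf.mono.monotoneOn.mono (Icc_subset_Icc le_rfl hx.2.le)).derivWithin_nonneg⟩

theorem derivWithin_right (hf : SClass f c) {x : ℝ} (hx : x ∈ Ioo c 1) :
    derivWithin f (Icc x 1) x = deriv f x ∧ deriv f x ≤ 0 := by
  have h1 : derivWithin f (Icc x 1) x = deriv f x := (hf.differentiableAt_right hx).derivWithin
    (uniqueDiffOn_Icc hx.2 x ⟨le_rfl, hx.2.le⟩)
  exact ⟨h1, h1 ▸ (hf.anti.antitoneOn.mono (Icc_subset_Icc hx.1.le le_rfl)).derivWithin_nonpos⟩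

theorem monotoneOn_sub (hf : SClass f c) (hg : SClass g c)
    (hd : ∀ x ∈ Icc (0 : ℝ) 1, |derivWithin g (Icc 0 x) x| ≤ |derivWithin f (Icc 0 x) x|) :
    MonotoneOn (f - g) (Icc 0 c) := by
  refine monotoneOn_of_deriv_nonneg (convex_Icc 0 c)
    (hf.smoothL.continuousOn.sub hg.smoothL.continuousOn) ?_ ?_ <;> rw [interior_Icc] <;>
    intro x hx
  · exact ((hf.differentiableAt_left hx).sub
      (hg.differentiableAt_left hx)).differentiableWithinAt
  · rw [deriv_sub (hf.differentiableAt_left hx) (hg.differentiableAt_left hx)]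
    have h1 := hd x ⟨hx.1.le, hx.2.le.trans hf.hc.2.le⟩
    rw [(hf.derivWithin_left hx).1, (hg.derivWithin_left hx).1,
      abs_of_nonneg (hf.derivWithin_left hx).2, abs_of_nonneg (hg.derivWithin_left hx).2] at h1
    linarith

theorem antitoneOn_sub (hf : SClass f c) (hg : SClass g c)
    (hd : ∀ x ∈ Icc (0 : ℝ) 1, |derivWithin g (Icc x 1) x| ≤ |derivWithin f (Icc x 1) x|) :
    AntitoneOn (f - g) (Icc c 1) := by
  refine antitoneOn_of_deriv_nonpos (convex_Icc c 1)
    (hf.smoothR.continuousOn.sub hg.smoothR.continuousOn) ?_ ?_ <;> rw [interior_Icc] <;>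
    intro x hx
  · exact ((hf.differentiableAt_right hx).sub
      (hg.differentiableAt_right hx)).differentiableWithinAt
  · rw [deriv_sub (hf.differentiableAt_right hx) (hg.differentiableAt_right hx)]
    have h1 := hd x ⟨hf.hc.1.le.trans hx.1.le, hx.2.le⟩
    rw [(hf.derivWithin_right hx).1, (hg.derivWithin_right hx).1,
      abs_of_nonpos (hf.derivWithin_right hx).2, abs_of_nonpos (hg.derivWithin_right hx).2] at h1
    linarith

end SClass

/-- Secants of a concave function that are further to the right have smaller slope. -/
theorem ConcaveOn.slope_le_slope_of_le {s : Set ℝ} {f : ℝ → ℝ} (hf : ConcaveOn ℝ s f)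
    {x y u v : ℝ} (hx : x ∈ s) (hv : v ∈ s) (hxy : x < y) (huv : u < v) (hxu : x ≤ u)
    (hyv : y ≤ v) : (f v - f u) / (v - u) ≤ (f y - f x) / (y - x) := by
  have hI : Icc x v ⊆ s := hf.1.ordConnected.out hx hv
  have hy : y ∈ s := hI ⟨hxy.le, hyv⟩
  have hu : u ∈ s := hI ⟨hxu, huv.le⟩
  have h1 := hf.neg.secant_mono hx hy hv hxy.ne' (hxy.trans_le hyv).ne' hyv
  have h2 := hf.neg.secant_mono hv hx hu (hxy.trans_le hyv).ne huv.ne hxu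
  simp only [Pi.neg_apply] at h1 h2
  rw [← neg_div_neg_eq, ← neg_div_neg_eq (-f u - -f v)] at h2
  have e1 : -(-f x - -f v) / -(x - v) = (f x - f v) / (v - x) := by ring_nf
  have e2 : -(-f u - -f v) / -(u - v) = (f u - f v) / (v - u) := by ring_nf
  have e3 : (f x - f v) / (v - x) = (-f v - -f x) / (v - x) := by ring_nf
  have e4 : (f u - f v) / (v - u) = -((f v - f u) / (v - u)) := by rw [← neg_div, neg_sub]
  have e5 : (-f y - -f x) / (y - x) = -((f y - f x) / (y - x)) := by rw [← neg_div]; ring_nf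
  linarith

theorem SClass.slower {f g : ℝ → ℝ} {c af af' ag ag' l : ℝ} (hf : SClass f c)
    (hmono : MonotoneOn (f - g) (Icc 0 c)) (hanti : AntitoneOn (f - g) (Icc c 1))
    (Uf : UnimodalMap f 0 1 c af af') (Ug : UnimodalMap g 0 1 c ag ag') (hl : 0 < l) (hl1 : l ≤ 1)
    (ha : c + l * (af - c) = ag) (hA : ag' ≤ c + l * (af' - c)) :
    Slower (rescale c l f) g (c + l * (0 - c)) (c + l * (1 - c)) 0 1 c ag
      (c + l * (af' - c)) ag' := by
  have hc := hf.hc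
  have hz : 0 ≤ c + l * (0 - c) := by nlinarith [hc.1]
  have hw : c + l * (1 - c) ≤ 1 := by nlinarith [hc.2]
  have Uh := ha ▸ Uf.rescale hl
  have hR : ∀ x y, c ≤ x → x ≤ y → y ≤ c + l * (1 - c) →
      rescale c l f y - rescale c l f x ≤ g y - g x := by
    intro x y hx hxy hy
    rcases hxy.eq_or_lt with rfl | hxy
    · simp
    obtain ⟨u, rfl⟩ := exists_homothety_eq (c := c) hl x
    obtain ⟨v, rfl⟩ := exists_homothety_eq (c := c) hl y
    rw [rescale_homothety hl, rescale_homothety hl]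
    have huv := (homothety_lt_homothety hl).1 hxy
    have hv1 := (homothety_le_homothety hl).1 hy
    have hcu : c ≤ u := by nlinarith
    have hc0 := hc.1
    have hc1 := hc.2
    have e1 := hanti ⟨hx, by linarith⟩ ⟨by linarith, by linarith⟩ hxy.le
    simp only [Pi.sub_apply] at e1
    have e2 := hf.concave.slope_le_slope_of_le (x := c + l * (u - c)) (y := c + l * (v - c))
      (u := u) (v := v) ⟨by linarith, by linarith⟩ ⟨by linarith, hv1⟩ hxy huv
      (by nlinarith) (by nlinarith)
    have e3 : v - u = (c + l * (v - c) - (c + l * (u - c))) / l := by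
      field_simp
      ring
    rw [e3, div_div_eq_mul_div, div_le_div_iff_of_pos_right (by linarith)] at e2
    linarith
  have hLf : ∀ x y, c + l * (0 - c) ≤ x → x ≤ y → y ≤ c →
      g y - g x ≤ rescale c l f y - rescale c l f x := by
    intro x y hx hxy hy
    rcases hxy.eq_or_lt with rfl | hxy
    · simp
    obtain ⟨u, rfl⟩ := exists_homothety_eq (c := c) hl x
    obtain ⟨v, rfl⟩ := exists_homothety_eq (c := c) hl y
    rw [rescale_homothety hl, rescale_homothety hl]
    have huv := (homothety_lt_homothety hl).1 hxy
    have hu0 := (homothety_le_homothety hl).1 hx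
    have hvc : v ≤ c := by nlinarith
    have hc0 := hc.1
    have hc1 := hc.2
    have e1 := hmono ⟨by linarith, by linarith⟩ ⟨by linarith, hy⟩ hxy.le
    simp only [Pi.sub_apply] at e1
    have e2 := hf.concave.slope_le_slope_of_le (x := u) (y := v)
      (u := c + l * (u - c)) (v := c + l * (v - c)) ⟨hu0, by linarith⟩
      ⟨by linarith, by linarith⟩ huv hxy (by nlinarith) (by nlinarith)
    have e3 : v - u = (c + l * (v - c) - (c + l * (u - c))) / l := by
      field_simp
      ring
    rw [e3, div_div_eq_mul_div, div_le_div_iff_of_pos_right (by linarith)] at e2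
    linarith
  refine ⟨Uh, Ug, hA, hz, fun x hx => ?_, fun x hx => ?_, fun x hx => ?_⟩
  · have e1 := hLf x ag' hx.1 hx.2 Ug.A_lt.le
    have e2 := Uh.map_le_of_le_A (hx.1.trans hx.2) hA
    rw [Ug.map_A] at e1
    linarith
  · have e1 := hR x ag hx.1 hx.2 Uh.a_le
    rw [Ug.map_a, Uh.map_a] at e1
    linarith
  · have e0 := (Uh.maps (x := c) ⟨by linarith [Uh.lt_A, Uh.A_lt], by linarith [Uh.c_lt, Uh.a_le]⟩).2
    have e1 := hR ag x Ug.c_lt.le hx.1 (hx.2.trans e0)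
    rw [Ug.map_a, Uh.map_a] at e1
    linarith

theorem stmt9 (f g : ℝ → ℝ) (c af af' ag ag' : ℝ)
    (hf : SClass f c) (hg : SClass g c)
    -- |f'(x)| ≥ |g'(x)| for every x (one-sided derivatives at the turning points)
    (hderiv : ∀ x ∈ Set.Icc (0:ℝ) 1,
      |derivWithin g (Set.Icc 0 x) x| ≤ |derivWithin f (Set.Icc 0 x) x| ∧
      |derivWithin g (Set.Icc x 1) x| ≤ |derivWithin f (Set.Icc x 1) x|)
    -- a_f and a'_f
    (haf : af ∈ Set.Ioo c 1) (hfaf : f af = af)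
    (haf' : af' ∈ Set.Icc (0:ℝ) c) (hfaf' : f af' = af)
    -- a_g and a'_g
    (hag : ag ∈ Set.Ioo c 1) (hgag : g ag = ag)
    (hag' : ag' ∈ Set.Icc (0:ℝ) c) (hgag' : g ag' = ag)
    -- |c − a_f|/|c − a'_f| ≥ |c − a_g|/|c − a'_g|
    (hratio : |c - ag| / |c - ag'| ≤ |c - af| / |c - af'|) :
    overRotInterval g (Set.Icc 0 1) ⊆ overRotInterval f (Set.Icc 0 1) := by
  have Uf := hf.unimodalMap haf hfaf haf' hfaf'
  have Ug := hg.unimodalMap hag hgag hag' hgag'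
  have hmono := hf.monotoneOn_sub hg fun x hx => (hderiv x hx).1
  have hanti := hf.antitoneOn_sub hg fun x hx => (hderiv x hx).2
  have hle : ag ≤ af := by
    by_contra! hlt
    have h1 := hf.anti ⟨haf.1.le, haf.2.le⟩ ⟨hag.1.le, hag.2.le⟩ hlt
    have h2 := hanti ⟨hag.1.le, hag.2.le⟩ ⟨hf.hc.2.le, le_rfl⟩ hag.2.le
    simp only [Pi.sub_apply, hf.f1, hg.f1] at h2
    linarith
  have hf0 : 0 < af - c := sub_pos.2 haf.1
  have hg0 : 0 < ag - c := sub_pos.2 hag.1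
  have hf1 : 0 < c - af' := sub_pos.2 Uf.A_lt
  have hg1 : 0 < c - ag' := sub_pos.2 Ug.A_lt
  have hl : 0 < (ag - c) / (af - c) := div_pos hg0 hf0
  refine Slower.overRotInterval_subset hl Uf ?_ (hf.slower hmono hanti Uf Ug hl ?_ ?_ ?_)
  · rw [div_mul_cancel₀ _ hf0.ne', add_sub_cancel]
  · exact (div_le_one hf0).2 (by linarith)
  · rw [div_mul_cancel₀ _ hf0.ne', add_sub_cancel]
  · rw [abs_sub_comm c ag, abs_sub_comm c af, abs_of_pos hg0, abs_of_pos hf0, abs_of_pos hg1,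
      abs_of_pos hf1, div_le_div_iff₀ hg1 hf1] at hratio
    have h1 : (ag - c) / (af - c) * (c - af') ≤ c - ag' := by
      rw [div_mul_eq_mul_div, div_le_iff₀ hf0]
      linarith
    linarith
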